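/- Let 𝓛 and 𝓛' be ergodic symmetric generator matrices on the same finite state space Ω with |Ω| ≥ 2 (so both have uniform stationary distribution). For each transition (α,β) of 𝓛', let Γ_{α,β} be a nonempty finite set of 𝓛-paths from α to β together with a flow g_{α,β} : Γ_{α,β} → [0,1] satisfying Σ_{γ∈Γ_{α,β}} g_{α,β}(γ) = 1. Then τ(𝓛) ≤ τ(𝓛') · max over all transitions (σ,η) of 𝓛 of the quantity (1/𝓛[σ→η]) · Σ over all transitions (α,β) of 𝓛' and all paths γ ∈ Γ_{α,β} that use (σ,η) of g_{α,β}(γ)·𝓛'[α→β]·|γ|, where |γ| is the length of γ and each use of (σ,η) in γ is counted with multiplicity. -/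

import Mathlib

open Finset
open scoped Classical

section Markov

variable {Ω : Type*} [Fintype Ω]

/-- A generator matrix: nonnegative off-diagonal entries, zero row sums. -/
def IsGenerator (L : Ω → Ω → ℝ) : Prop :=
  (∀ x y : Ω, x ≠ y → 0 ≤ L x y) ∧ (∀ x : Ω, ∑ y : Ω, L x y = 0)

/-- A transition of a generator matrix. -/
def IsTransition (L : Ω → Ω → ℝ) (x y : Ω) : Prop := x ≠ y ∧ 0 < L x y

/-- Ergodicity: the directed graph of transitions is strongly connected. -/
def IsErgodicGen (L : Ω → Ω → ℝ) : Prop :=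
  ∀ x y : Ω, Relation.ReflTransGen (IsTransition L) x y

/-- Reversibility with respect to a distribution π. -/
def IsReversible (L : Ω → Ω → ℝ) (π : Ω → ℝ) : Prop :=
  ∀ x y : Ω, π x * L x y = π y * L y x

/-- The variance form. -/
noncomputable def VarForm (π : Ω → ℝ) (f : Ω → ℝ) : ℝ :=
  (1 / 2) * ∑ a : Ω, ∑ b : Ω, π a * π b * (f a - f b) ^ 2

/-- The Dirichlet form. -/
noncomputable def DirForm (π : Ω → ℝ) (L : Ω → Ω → ℝ) (f : Ω → ℝ) : ℝ :=
  (1 / 2) * ∑ a : Ω, ∑ b : Ω, π a * L a b * (f a - f b) ^ 2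

/-- The spectral gap: infimum (= minimum) of the Rayleigh quotient over nonconstant functions. -/
noncomputable def specGap (π : Ω → ℝ) (L : Ω → Ω → ℝ) : ℝ :=
  sInf {r : ℝ | ∃ f : Ω → ℝ, (∃ a b : Ω, f a ≠ f b) ∧ r = DirForm π L f / VarForm π f}

/-- The relaxation time, with the convention that it equals 1 on a one-point space. -/
noncomputable def relaxTime (π : Ω → ℝ) (L : Ω → Ω → ℝ) : ℝ :=
  if ∃ a b : Ω, a ≠ b then 1 / specGap π L else 1

/-- The uniform distribution on a finite type. -/
noncomputable def unif (Ω : Type*) [Fintype Ω] : Ω → ℝ := fun _ => 1 / (Fintype.card Ω : ℝ)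

end Markov

section Paths

variable {Ω : Type*} [Fintype Ω] [DecidableEq Ω]

/-- `γ` is an `L`-path from `a` to `b`: a sequence of at least two states, starting at `a`,
ending at `b`, each consecutive pair being a transition of `L`. -/
def IsLPath (L : Ω → Ω → ℝ) (a b : Ω) (γ : List Ω) : Prop :=
  2 ≤ γ.length ∧ γ.head? = some a ∧ γ.getLast? = some b ∧ γ.Chain' (IsTransition L)

/-- The `ω`-weight of a path: the sum of the weights of its steps. -/
noncomputable def pathWeight (ω : Ω → Ω → ℝ) (γ : List Ω) : ℝ :=
  ((γ.zip γ.tail).map fun p => ω p.1 p.2).sum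

/-- The length `|γ|` of a path (number of steps). -/
def pathLen (γ : List Ω) : ℕ := γ.length - 1

/-- The number of times the path `γ` uses the transition `(σ,η)`, with multiplicity. -/
def pathUses (γ : List Ω) (σ η : Ω) : ℕ := (γ.zip γ.tail).count (σ, η)

end Paths

/-!
Comparing Dirichlet forms `𝓔_{𝓛'} ≤ M · 𝓔_𝓛` compares relaxation times. For a transition `(α,β)` of
`𝓛'`, the difference `f α - f β` telescopes along each path `γ ∈ Γ_{α,β}`, so by Cauchy–Schwarz its
square is at most `|γ|` times the sum of the squared increments of `f` along `γ`. Averaging over the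
flow and collecting the contributions of each transition `(σ,η)` of `𝓛`, the coefficient of
`(f σ - f η)²` is the load that the flow puts on `(σ,η)`, which is at most `M · π(σ) · 𝓛[σ→η]` for
`π` the underlying distribution.

Inverting the gaps requires `Gap(𝓛') > 0`. This is the same comparison again: the variance is the
Dirichlet form of the chain that jumps to a fresh sample of `π`, and ergodicity routes each of its
jumps through a path of `𝓛'`.
-/

section PathWeights

variable {Ω : Type*}

lemma sq_list_sum_le_length_mul_sum_sq {ι R : Type*} [Semiring R] [LinearOrder R]
    [IsStrictOrderedRing R] [ExistsAddOfLE R] (l : List ι) (u : ι → R) :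
    (l.map u).sum ^ 2 ≤ l.length * (l.map fun i => u i ^ 2).sum := by
  rw [← Fin.sum_univ_fun_getElem, ← Fin.sum_univ_fun_getElem]
  simpa only [card_univ, Fintype.card_fin] using
    sq_sum_le_card_mul_sum_sq (s := univ) (f := fun i : Fin l.length => u l[(i : ℕ)])

lemma sq_pathWeight_le (ω : Ω → Ω → ℝ) (γ : List Ω) :
    pathWeight ω γ ^ 2 ≤ pathLen γ * pathWeight (fun x y => ω x y ^ 2) γ := by
  have hlen : (γ.zip γ.tail).length = pathLen γ := by simp [pathLen]
  rw [← hlen]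
  exact sq_list_sum_le_length_mul_sum_sq (γ.zip γ.tail) fun p => ω p.1 p.2

lemma pathWeight_sub_of_getLast? (f : Ω → ℝ) {a b : Ω} {l : List Ω}
    (hlast : (a :: l).getLast? = some b) :
    pathWeight (fun x y => f x - f y) (a :: l) = f a - f b := by
  induction l generalizing a with
  | nil =>
    obtain rfl : a = b := by simpa using hlast
    simp [pathWeight]
  | cons c l ih =>
    have htail : pathWeight (fun x y => f x - f y) (c :: l) = f c - f b :=
      ih (by simpa only [List.getLast?_cons_cons] using hlast)
    calc pathWeight (fun x y => f x - f y) (a :: c :: l)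
        = (f a - f c) + pathWeight (fun x y => f x - f y) (c :: l) := by simp [pathWeight]
      _ = f a - f b := by rw [htail, sub_add_sub_cancel]

lemma IsLPath.sq_sub_le {L : Ω → Ω → ℝ} {a b : Ω} {γ : List Ω} (hγ : IsLPath L a b γ)
    (f : Ω → ℝ) :
    (f a - f b) ^ 2 ≤ pathLen γ * pathWeight (fun x y => (f x - f y) ^ 2) γ := by
  obtain ⟨-, hhead, hlast, -⟩ := hγ
  obtain ⟨l, rfl⟩ := List.head?_eq_some_iff.1 hhead
  rw [← pathWeight_sub_of_getLast? f hlast]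
  exact sq_pathWeight_le _ _

lemma pathWeight_eq_sum_pathUses [Fintype Ω] [DecidableEq Ω] (ω : Ω → Ω → ℝ) (γ : List Ω) :
    pathWeight ω γ = ∑ σ : Ω, ∑ η : Ω, pathUses γ σ η * ω σ η :=
  calc pathWeight ω γ
      = ∑ p ∈ (γ.zip γ.tail).toFinset, ((γ.zip γ.tail).count p : ℝ) * ω p.1 p.2 := by
        simp only [pathWeight, sum_list_map_count, nsmul_eq_mul]
        -- The two sides count with different lawful `BEq` instances on `Ω × Ω`.
        congr!
    _ = ∑ p : Ω × Ω, ((γ.zip γ.tail).count p : ℝ) * ω p.1 p.2 :=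
        sum_subset (subset_univ _) fun p _ hp => by
          rw [List.count_eq_zero_of_not_mem (mt List.mem_toFinset.2 hp), Nat.cast_zero, zero_mul]
    _ = ∑ σ : Ω, ∑ η : Ω, pathUses γ σ η * ω σ η := Fintype.sum_prod_type _

lemma IsLPath.pathUses_eq_zero [DecidableEq Ω] {L : Ω → Ω → ℝ} {a b σ η : Ω} {γ : List Ω}
    (hγ : IsLPath L a b γ) (hση : ¬ IsTransition L σ η) : pathUses γ σ η = 0 := by
  refine List.count_eq_zero_of_not_mem fun hmem => hση ?_
  obtain ⟨i, hi, hpair⟩ := List.mem_iff_getElem.1 hmem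
  have hlt : i + 1 < γ.length := by
    simp only [List.length_zip, List.length_tail] at hi
    omega
  have hstep : IsTransition L γ[i] γ[i + 1] := List.isChain_iff_getElem.1 hγ.2.2.2 i hlt
  simp only [List.getElem_zip, List.getElem_tail, Prod.mk.injEq] at hpair
  exact hpair.1 ▸ hpair.2 ▸ hstep

lemma IsErgodicGen.exists_isLPath {L : Ω → Ω → ℝ} (herg : IsErgodicGen L) {a b : Ω}
    (hab : a ≠ b) : ∃ γ, IsLPath L a b γ := by
  obtain ⟨l, hchain, hlast⟩ := List.exists_isChain_cons_of_relationReflTransGen (herg a b)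
  have hl : l ≠ [] := by
    rintro rfl
    exact hab hlast
  refine ⟨a :: l, Nat.succ_le_succ (List.length_pos_iff.2 hl), rfl, ?_, hchain⟩
  rw [List.getLast?_eq_some_getLast (List.cons_ne_nil a l), hlast]

end PathWeights

section SpectralGap

variable {Ω : Type*} [Fintype Ω]

lemma dirForm_eq_sum_isTransition {L : Ω → Ω → ℝ} (hL : ∀ x y, x ≠ y → 0 ≤ L x y) (π f : Ω → ℝ) :
    DirForm π L f = (1 / 2) * ∑ a : Ω, ∑ b : Ω,
      if IsTransition L a b then π a * L a b * (f a - f b) ^ 2 else 0 := by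
  refine congrArg _ (sum_congr rfl fun a _ => sum_congr rfl fun b _ => ?_)
  split_ifs with hab
  · rfl
  by_cases heq : a = b
  · simp [heq]
  · have hLab : L a b = 0 := (not_lt.1 fun hpos => hab ⟨heq, hpos⟩).antisymm (hL a b heq)
    simp [hLab]

lemma dirForm_nonneg {π : Ω → ℝ} (hπ : ∀ a, 0 ≤ π a) {L : Ω → Ω → ℝ}
    (hL : ∀ x y, x ≠ y → 0 ≤ L x y) (f : Ω → ℝ) : 0 ≤ DirForm π L f := by
  rw [dirForm_eq_sum_isTransition hL]
  refine mul_nonneg (by norm_num) (sum_nonneg fun a _ => sum_nonneg fun b _ => ?_)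
  split_ifs with hab
  · exact mul_nonneg (mul_nonneg (hπ a) hab.2.le) (sq_nonneg _)
  · rfl

lemma varForm_eq_dirForm (π f : Ω → ℝ) : VarForm π f = DirForm π (fun _ b => π b) f := rfl

lemma varForm_pos {π : Ω → ℝ} (hπ : ∀ a, 0 < π a) {f : Ω → ℝ} (hf : ∃ a b, f a ≠ f b) :
    0 < VarForm π f := by
  obtain ⟨a, b, hab⟩ := hf
  have hterm : ∀ x y, 0 ≤ π x * π y * (f x - f y) ^ 2 := fun x y =>
    mul_nonneg (mul_pos (hπ x) (hπ y)).le (sq_nonneg _)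
  have hpos : 0 < π a * π b * (f a - f b) ^ 2 :=
    mul_pos (mul_pos (hπ a) (hπ b)) (sq_pos_of_ne_zero (sub_ne_zero.2 hab))
  exact mul_pos (by norm_num) <|
    sum_pos' (fun x _ => sum_nonneg fun y _ => hterm x y)
      ⟨a, mem_univ a, sum_pos' (fun y _ => hterm a y) ⟨b, mem_univ b, hpos⟩⟩

lemma exists_apply_ne (α β : Type*) [Nontrivial α] [Nontrivial β] :
    ∃ f : α → β, ∃ a b, f a ≠ f b := by
  obtain ⟨a, b, hab⟩ := exists_pair_ne α
  obtain ⟨y, z, hyz⟩ := exists_pair_ne β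
  exact ⟨fun x => if x = a then y else z, a, b, by simpa [hab.symm] using hyz⟩

lemma specGap_nonneg {π : Ω → ℝ} (hπ : ∀ a, 0 < π a) {L : Ω → Ω → ℝ}
    (hL : ∀ x y, x ≠ y → 0 ≤ L x y) : 0 ≤ specGap π L := by
  refine Real.sInf_nonneg ?_
  rintro r ⟨f, hf, rfl⟩
  exact div_nonneg (dirForm_nonneg (fun a => (hπ a).le) hL f) (varForm_pos hπ hf).le

lemma specGap_mul_varForm_le_dirForm {π : Ω → ℝ} (hπ : ∀ a, 0 < π a) {L : Ω → Ω → ℝ}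
    (hL : ∀ x y, x ≠ y → 0 ≤ L x y) (f : Ω → ℝ) :
    specGap π L * VarForm π f ≤ DirForm π L f := by
  have hDir := dirForm_nonneg (fun a => (hπ a).le) hL
  by_cases hf : ∃ a b, f a ≠ f b
  · refine (le_div_iff₀ (varForm_pos hπ hf)).1 (csInf_le ⟨0, ?_⟩ ⟨f, hf, rfl⟩)
    rintro r ⟨h, hh, rfl⟩
    exact div_nonneg (hDir h) (varForm_pos hπ hh).le
  · push Not at hf
    have hVar : VarForm π f = 0 := by simp [VarForm, fun a b => sub_eq_zero.2 (hf a b)]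
    simpa only [hVar, mul_zero] using hDir f

lemma le_specGap [Nontrivial Ω] {π : Ω → ℝ} (hπ : ∀ a, 0 < π a) {L : Ω → Ω → ℝ} {c : ℝ}
    (h : ∀ f, c * VarForm π f ≤ DirForm π L f) : c ≤ specGap π L := by
  obtain ⟨f₀, hf₀⟩ := exists_apply_ne Ω ℝ
  refine le_csInf ⟨_, f₀, hf₀, rfl⟩ ?_
  rintro r ⟨f, hf, rfl⟩
  exact (le_div_iff₀ (varForm_pos hπ hf)).2 (h f)

lemma le_mul_specGap [Nontrivial Ω] {π : Ω → ℝ} (hπ : ∀ a, 0 < π a) {L : Ω → Ω → ℝ}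
    (hL : ∀ x y, x ≠ y → 0 ≤ L x y) {c M : ℝ} (hc : 0 < c)
    (h : ∀ f, c * VarForm π f ≤ M * DirForm π L f) : c ≤ M * specGap π L := by
  have hM : 0 < M := by
    obtain ⟨f, hf⟩ := exists_apply_ne Ω ℝ
    exact pos_of_mul_pos_left ((mul_pos hc (varForm_pos hπ hf)).trans_le (h f))
      (dirForm_nonneg (fun a => (hπ a).le) hL f)
  rw [← div_le_iff₀' hM]
  refine le_specGap hπ fun f => ?_
  rw [div_mul_eq_mul_div, div_le_iff₀' hM]
  exact h f

lemma relaxTime_le_of_dirForm_le [Nontrivial Ω] {π : Ω → ℝ} (hπ : ∀ a, 0 < π a)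
    {L L' : Ω → Ω → ℝ} (hL : ∀ x y, x ≠ y → 0 ≤ L x y) (hL' : ∀ x y, x ≠ y → 0 ≤ L' x y)
    (hgap' : 0 < specGap π L') {M : ℝ} (h : ∀ f, DirForm π L' f ≤ M * DirForm π L f) :
    relaxTime π L ≤ relaxTime π L' * M := by
  have hle : specGap π L' ≤ M * specGap π L :=
    le_mul_specGap hπ hL hgap' fun f => (specGap_mul_varForm_le_dirForm hπ hL' f).trans (h f)
  have hgap : 0 < specGap π L :=
    (specGap_nonneg hπ hL).lt_of_ne' (right_ne_zero_of_mul (hgap'.trans_le hle).ne')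
  simp only [relaxTime, if_pos (exists_pair_ne Ω)]
  rwa [one_div_mul_eq_div, div_le_div_iff₀ hgap hgap', one_mul]

end SpectralGap

lemma exists_le_mul_of_pos {ι K : Type*} [Finite ι] [Field K] [LinearOrder K]
    [IsStrictOrderedRing K] (u w : ι → K) :
    ∃ M, ∀ i, 0 < w i → u i ≤ M * w i := by
  obtain ⟨M, hM⟩ := (Set.finite_range fun i => u i / w i).bddAbove
  exact ⟨M, fun i hi => (div_le_iff₀ hi).1 (hM ⟨i, rfl⟩)⟩

section PathFlows

variable {Ω : Type*}

/-- Fractional paths: each transition `(α,β)` of `L'` is routed through the `L`-paths in `Γ α β`,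
the fraction `g α β γ` of it along `γ`. Values of `Γ` and `g` at other pairs are irrelevant. -/
structure IsUnitPathFlow (L L' : Ω → Ω → ℝ) (Γ : Ω → Ω → Finset (List Ω))
    (g : Ω → Ω → List Ω → ℝ) : Prop where
  isLPath : ∀ {α β}, IsTransition L' α β → ∀ γ ∈ Γ α β, IsLPath L α β γ
  nonneg : ∀ {α β}, IsTransition L' α β → ∀ γ ∈ Γ α β, 0 ≤ g α β γ
  sum_eq_one : ∀ {α β}, IsTransition L' α β → ∑ γ ∈ Γ α β, g α β γ = 1

/-- The load of a path flow on `(σ,η)`: the amount of flow through it, each use by a path `γ`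
counting `|γ|` times and each transition `(α,β)` of `L'` carrying `π α * L' α β` units. The
congestion of `(σ,η)` is this load divided by the capacity `π σ * L σ η`. -/
noncomputable def flowLoad [Fintype Ω] [DecidableEq Ω] (π : Ω → ℝ) (L' : Ω → Ω → ℝ)
    (Γ : Ω → Ω → Finset (List Ω)) (g : Ω → Ω → List Ω → ℝ) (σ η : Ω) : ℝ :=
  ∑ α : Ω, ∑ β : Ω,
    if IsTransition L' α β then
      ∑ γ ∈ Γ α β, pathUses γ σ η * g α β γ * (π α * L' α β) * pathLen γ
    else 0

lemma IsErgodicGen.exists_isUnitPathFlow {L : Ω → Ω → ℝ} (herg : IsErgodicGen L)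
    (L' : Ω → Ω → ℝ) : ∃ Γ g, IsUnitPathFlow L L' Γ g := by
  choose! γ hγ using fun a b => herg.exists_isLPath (a := a) (b := b)
  refine ⟨fun α β => {γ α β}, fun _ _ _ => 1, ?_, ?_, ?_⟩
  · rintro α β ⟨hne, -⟩ _ hmem
    exact mem_singleton.1 hmem ▸ hγ α β hne
  · exact fun _ _ _ => zero_le_one
  · exact fun _ => sum_singleton _ _

variable {L L' : Ω → Ω → ℝ} {Γ : Ω → Ω → Finset (List Ω)} {g : Ω → Ω → List Ω → ℝ}

lemma IsUnitPathFlow.sq_sub_le (hflow : IsUnitPathFlow L L' Γ g) {α β : Ω}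
    (hαβ : IsTransition L' α β) (f : Ω → ℝ) :
    (f α - f β) ^ 2 ≤
      ∑ γ ∈ Γ α β, g α β γ * (pathLen γ * pathWeight (fun x y => (f x - f y) ^ 2) γ) :=
  calc (f α - f β) ^ 2
      = ∑ γ ∈ Γ α β, g α β γ * (f α - f β) ^ 2 := by
        rw [← sum_mul, hflow.sum_eq_one hαβ, one_mul]
    _ ≤ _ := sum_le_sum fun γ hγ =>
        mul_le_mul_of_nonneg_left ((hflow.isLPath hαβ γ hγ).sq_sub_le f) (hflow.nonneg hαβ γ hγ)

variable [Fintype Ω] [DecidableEq Ω]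

lemma IsUnitPathFlow.flowLoad_eq_zero (hflow : IsUnitPathFlow L L' Γ g) (π : Ω → ℝ) {σ η : Ω}
    (hση : ¬ IsTransition L σ η) : flowLoad π L' Γ g σ η = 0 := by
  refine sum_eq_zero fun α _ => sum_eq_zero fun β _ => ?_
  split_ifs with hαβ
  · refine sum_eq_zero fun γ hγ => ?_
    simp [(hflow.isLPath hαβ γ hγ).pathUses_eq_zero hση]
  · rfl

lemma sum_flowLoad_mul (π : Ω → ℝ) (L' : Ω → Ω → ℝ) (Γ : Ω → Ω → Finset (List Ω))
    (g : Ω → Ω → List Ω → ℝ) (ω : Ω → Ω → ℝ) :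
    ∑ σ : Ω, ∑ η : Ω, flowLoad π L' Γ g σ η * ω σ η =
      ∑ α : Ω, ∑ β : Ω,
        if IsTransition L' α β then
          π α * L' α β * ∑ γ ∈ Γ α β, g α β γ * (pathLen γ * pathWeight ω γ)
        else 0 := by
  simp only [flowLoad, ← Fintype.sum_prod_type']
  simp only [sum_mul]
  rw [sum_comm]
  refine sum_congr rfl fun p _ => ?_
  split_ifs
  · simp only [pathWeight_eq_sum_pathUses, ← Fintype.sum_prod_type']
    simp only [sum_mul, mul_sum]
    rw [sum_comm]
    exact sum_congr rfl fun γ _ => sum_congr rfl fun q _ => by ring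
  · simp only [zero_mul, sum_const_zero]

lemma IsUnitPathFlow.dirForm_le_sum_flowLoad {π : Ω → ℝ} (hflow : IsUnitPathFlow L L' Γ g)
    (hπ : ∀ a, 0 ≤ π a) (hL' : ∀ x y, x ≠ y → 0 ≤ L' x y) (f : Ω → ℝ) :
    DirForm π L' f ≤
      (1 / 2) * ∑ σ : Ω, ∑ η : Ω, flowLoad π L' Γ g σ η * (f σ - f η) ^ 2 := by
  rw [dirForm_eq_sum_isTransition hL', sum_flowLoad_mul π L' Γ g fun σ η => (f σ - f η) ^ 2]
  refine mul_le_mul_of_nonneg_left ?_ (by norm_num)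
  refine sum_le_sum fun α _ => sum_le_sum fun β _ => ?_
  split_ifs with hαβ
  · exact mul_le_mul_of_nonneg_left (hflow.sq_sub_le hαβ f) (mul_nonneg (hπ α) hαβ.2.le)
  · rfl

theorem IsUnitPathFlow.dirForm_le {π π' : Ω → ℝ} (hflow : IsUnitPathFlow L L' Γ g)
    (hπ' : ∀ a, 0 ≤ π' a) (hL : ∀ x y, x ≠ y → 0 ≤ L x y) (hL' : ∀ x y, x ≠ y → 0 ≤ L' x y)
    {M : ℝ} (hM : ∀ σ η, IsTransition L σ η → flowLoad π' L' Γ g σ η ≤ M * (π σ * L σ η))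
    (f : Ω → ℝ) : DirForm π' L' f ≤ M * DirForm π L f := by
  refine (hflow.dirForm_le_sum_flowLoad hπ' hL' f).trans ?_
  rw [dirForm_eq_sum_isTransition hL, mul_left_comm]
  refine mul_le_mul_of_nonneg_left ?_ (by norm_num)
  simp only [mul_sum]
  refine sum_le_sum fun σ _ => sum_le_sum fun η _ => ?_
  split_ifs with hση
  · rw [← mul_assoc]
    exact mul_le_mul_of_nonneg_right (hM σ η hση) (sq_nonneg _)
  · rw [hflow.flowLoad_eq_zero π' hση, zero_mul, mul_zero]

end PathFlows

section Comparison

variable {Ω : Type*} [Fintype Ω]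

lemma IsErgodicGen.specGap_pos [Nontrivial Ω] {π : Ω → ℝ} (hπ : ∀ a, 0 < π a) {L : Ω → Ω → ℝ}
    (herg : IsErgodicGen L) (hL : ∀ x y, x ≠ y → 0 ≤ L x y) : 0 < specGap π L := by
  obtain ⟨Γ, g, hflow⟩ := herg.exists_isUnitPathFlow fun _ b => π b
  obtain ⟨M, hM⟩ := exists_le_mul_of_pos (fun p : Ω × Ω => flowLoad π (fun _ b => π b) Γ g p.1 p.2)
    fun p => π p.1 * L p.1 p.2
  have hpoincare : ∀ f, VarForm π f ≤ M * DirForm π L f := fun f => by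
    rw [varForm_eq_dirForm]
    exact hflow.dirForm_le (fun a => (hπ a).le) hL (fun _ b _ => (hπ b).le)
      (fun σ η hση => hM (σ, η) (mul_pos (hπ σ) hση.2)) f
  have hle : 1 ≤ M * specGap π L :=
    le_mul_specGap hπ hL one_pos fun f => (one_mul (VarForm π f)).trans_le (hpoincare f)
  exact (specGap_nonneg hπ hL).lt_of_ne' (right_ne_zero_of_mul (one_pos.trans_le hle).ne')

theorem fractional_paths_general [DecidableEq Ω] [Nontrivial Ω] {π : Ω → ℝ} (hπ : ∀ a, 0 < π a)
    {L L' : Ω → Ω → ℝ} (hgen : IsGenerator L) (hgen' : IsGenerator L') (herg' : IsErgodicGen L')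
    {Γ : Ω → Ω → Finset (List Ω)} {g : Ω → Ω → List Ω → ℝ} (hflow : IsUnitPathFlow L L' Γ g)
    {M : ℝ} (hM : ∀ σ η, IsTransition L σ η → flowLoad π L' Γ g σ η ≤ M * (π σ * L σ η)) :
    relaxTime π L ≤ relaxTime π L' * M :=
  relaxTime_le_of_dirForm_le hπ hgen.1 hgen'.1 (herg'.specGap_pos hπ hgen'.1) <|
    hflow.dirForm_le (fun a => (hπ a).le) hgen.1 hgen'.1 hM

lemma unif_pos [Nonempty Ω] (a : Ω) : 0 < unif Ω a :=
  one_div_pos.2 (Nat.cast_pos.2 Fintype.card_pos)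

lemma flowLoad_unif_le_iff [DecidableEq Ω] [Nonempty Ω] {L : Ω → Ω → ℝ} {σ η : Ω}
    (hση : 0 < L σ η) (L' : Ω → Ω → ℝ) (Γ : Ω → Ω → Finset (List Ω)) (g : Ω → Ω → List Ω → ℝ)
    (M : ℝ) :
    flowLoad (unif Ω) L' Γ g σ η ≤ M * (unif Ω σ * L σ η) ↔
      (1 / L σ η) * (∑ α : Ω, ∑ β : Ω,
        if IsTransition L' α β then
          ∑ γ ∈ Γ α β, (pathUses γ σ η : ℝ) * g α β γ * L' α β * (pathLen γ : ℝ)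
        else 0) ≤ M := by
  have hload : flowLoad (unif Ω) L' Γ g σ η = unif Ω σ * ∑ α : Ω, ∑ β : Ω,
      if IsTransition L' α β then
        ∑ γ ∈ Γ α β, (pathUses γ σ η : ℝ) * g α β γ * L' α β * (pathLen γ : ℝ)
      else 0 := by
    simp only [flowLoad, unif, mul_sum, mul_ite, mul_zero, mul_assoc, mul_left_comm]
  rw [hload, mul_left_comm, mul_le_mul_iff_right₀ (unif_pos σ), one_div_mul_eq_div,
    div_le_iff₀ hση]

end Comparison

/-- fractional paths / multi-commodity flows method, unit weights:
for ergodic symmetric generators `L`, `L'` on the same state space (both with uniform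
stationary distribution), and for each transition `(α,β)` of `L'` a nonempty finite set
`Γ_{α,β}` of `L`-paths from `α` to `β` carrying a unit flow `g_{α,β}`,
`τ(𝓛) ≤ τ(𝓛') · max_{(σ,η)} (1/𝓛[σ→η]) Σ_{(α,β)} Σ_{γ ∈ Γ_{α,β}, γ ∋ (σ,η)}
g_{α,β}(γ)·𝓛'[α→β]·|γ|`, uses counted with multiplicity. -/
theorem fractional_paths
    {Ω : Type} [Fintype Ω] [DecidableEq Ω] (hcard : 2 ≤ Fintype.card Ω)
    (L L' : Ω → Ω → ℝ)
    (hgen : IsGenerator L) (hgen' : IsGenerator L')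
    (hsym : ∀ x y : Ω, L x y = L y x) (hsym' : ∀ x y : Ω, L' x y = L' y x)
    (herg : IsErgodicGen L) (herg' : IsErgodicGen L')
    (Γ : Ω → Ω → Finset (List Ω)) (g : Ω → Ω → List Ω → ℝ)
    (hΓ : ∀ α β, IsTransition L' α β →
      (Γ α β).Nonempty ∧ ∀ γ ∈ Γ α β, IsLPath L α β γ)
    (hflow : ∀ α β, IsTransition L' α β →
      (∀ γ ∈ Γ α β, 0 ≤ g α β γ ∧ g α β γ ≤ 1) ∧ ∑ γ ∈ Γ α β, g α β γ = 1)
    (M : ℝ)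
    (hM : IsGreatest
      {r : ℝ | ∃ σ η : Ω, IsTransition L σ η ∧
        r = (1 / L σ η) *
          ∑ α : Ω, ∑ β : Ω,
            if IsTransition L' α β then
              ∑ γ ∈ Γ α β, (pathUses γ σ η : ℝ) * g α β γ * L' α β * (pathLen γ : ℝ)
            else 0} M) :
    relaxTime (unif Ω) L ≤ relaxTime (unif Ω) L' * M := by
  have : Nontrivial Ω := Fintype.one_lt_card_iff_nontrivial.1 hcard
  have hpaths : IsUnitPathFlow L L' Γ g :=
    ⟨fun h => (hΓ _ _ h).2, fun h γ hγ => ((hflow _ _ h).1 γ hγ).1, fun h => (hflow _ _ h).2⟩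
  exact fractional_paths_general unif_pos hgen hgen' herg' hpaths fun σ η hση =>
    (flowLoad_unif_le_iff hση.2 L' Γ g M).2 (hM.2 ⟨σ, η, hση, rfl⟩)
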